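/- arXiv:1904.11868 — 4 statements merged into one kernel-verified Lean document; each statement's English description precedes it below -/
import Mathlib

section
/- Let F be a finite field with q elements, n ≥ 2 an integer, and let D = diag{1,1,0,…,0} be the n×n diagonal matrix whose first two diagonal entries are 1 and all other entries 0. Then the number of matrices A ∈ M_n(F) such that both A and A − D are invertible equals (q^(2n) − q^(2n−1) − q^(2n−2) + q^(2n−3) + q^(n−1) − q^(n+1) + q) · ∏_{k=2}^{n−1} (q^n − q^k). Equivalently, |(D + GL_n(F)) ∩ GL_n(F)| equals this quantity. -/
/-!
Since `A - D = (1 - D A⁻¹) A`, putting `B = A⁻¹` reduces the count to that of the invertible `B`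
with `1 - D B` invertible. As `D` is the projection onto the first two coordinates, the latter says
that `1 - X` is invertible, `X` being the top left `2 × 2` block of `B`, a condition on the first
two rows only. Completing two independent rows to a basis gives the product `∏ (q ^ n - q ^ k)`.

It remains to count the independent pairs of rows with `1 - X` invertible. There are
`q ^ (2 * (n - 2)) * |GL₂(F)|` pairs with `1 - X` invertible in all. A dependent pair is `(0, b)`
or `(a, c • a)` with `a ≠ 0`; there `X` has rank at most one, and `det (1 - u vᵀ) = 1 - v ⬝ u` turns
invertibility of `1 - X` into `φ a ≠ 1` (or `φ b ≠ 1`) for a nonzero linear form `φ`.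
-/

open Module

section Counting

theorem ncard_setOf_prod {α β : Type*} [Fintype α] [Finite β] (p : α → β → Prop) :
    {x : α × β | p x.1 x.2}.ncard = ∑ a, {b | p a b}.ncard :=
  (Nat.card_congr (Equiv.subtypeProdEquivSigmaSubtype p)).trans Nat.card_sigma

theorem cast_prod_pow_sub_pow {a : ℕ} (ha : 0 < a) (r n : ℕ) :
    ((∏ k ∈ Finset.Ico r n, (a ^ n - a ^ k) : ℕ) : ℤ) =
      ∏ k ∈ Finset.Ico r n, ((a : ℤ) ^ n - (a : ℤ) ^ k) := by
  rw [Nat.cast_prod]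
  refine Finset.prod_congr rfl fun k hk => ?_
  rw [Nat.cast_sub (Nat.pow_le_pow_right ha (Finset.mem_Ico.1 hk).2.le), Nat.cast_pow,
    Nat.cast_pow]

theorem card_mul_ncard_preimage {G H : Type*} [AddGroup G] [AddGroup H] {f : G →+ H}
    (hf : Function.Surjective f) (s : Set H) :
    Nat.card H * (f ⁻¹' s).ncard = Nat.card G * s.ncard := by
  let e : G ⧸ f.ker ≃ H := (QuotientAddGroup.quotientKerEquivOfSurjective f hf).toEquiv
  have hpre : f ⁻¹' s = QuotientAddGroup.mk ⁻¹' (e ⁻¹' s) := rfl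
  have hs : (e ⁻¹' s).ncard = s.ncard :=
    Set.ncard_preimage_of_injective_subset_range e.injective (by simp)
  have hG : Nat.card G = Nat.card H * Nat.card f.ker := by
    rw [f.ker.card_eq_card_quotient_mul_card_addSubgroup, Nat.card_congr e]
  rw [hpre, ← Nat.card_coe_set_eq,
    Nat.card_congr (QuotientAddGroup.preimageMkEquivAddSubgroupProdSet _ _), Nat.card_prod,
    Nat.card_coe_set_eq, hs, hG, mul_assoc]

theorem ncard_isUnit_and_isUnit_sub {R : Type*} [Ring R] (d : R) :
    {a : R | IsUnit a ∧ IsUnit (a - d)}.ncard = {b : R | IsUnit b ∧ IsUnit (1 - d * b)}.ncard := by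
  have hunit (u : Rˣ) : IsUnit ((u : R) - d) ↔ IsUnit (1 - d * (u⁻¹ : Rˣ)) := by
    rw [← Units.isUnit_mul_units (1 - d * (u⁻¹ : Rˣ)) u, sub_mul, one_mul,
      Units.inv_mul_cancel_right]
  have himage (p : R → Prop) : {a : R | IsUnit a ∧ p a} = Units.val '' {u : Rˣ | p u} := by
    ext a
    constructor
    · rintro ⟨⟨u, rfl⟩, hu⟩
      exact ⟨u, hu, rfl⟩
    · rintro ⟨u, hu, rfl⟩
      exact ⟨u.isUnit, hu⟩
  rw [himage, himage, Set.ncard_image_of_injective _ Units.val_injective,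
    Set.ncard_image_of_injective _ Units.val_injective]
  simp only [hunit]
  exact Set.ncard_preimage_of_injective_subset_range (s := {u : Rˣ | IsUnit (1 - d * u)})
    inv_injective (by simp [(inv_surjective (G := Rˣ)).range_eq])

theorem ncard_isUnit_one_sub_eq_card_units (R : Type*) [Ring R] :
    {a : R | IsUnit (1 - a)}.ncard = Nat.card Rˣ := by
  have hrange : {a : R | IsUnit (1 - a)} = Set.range fun u : Rˣ => 1 - (u : R) := by
    ext a
    exact ⟨fun ⟨u, hu⟩ => ⟨u, by simp [hu]⟩, fun ⟨u, hu⟩ => ⟨u, by simp [← hu]⟩⟩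
  rw [hrange, ← Nat.card_coe_set_eq,
    Nat.card_range_of_injective fun u v h => Units.val_injective (sub_right_injective h)]

end Counting

section Determinant

variable {m n R : Type*} [Fintype m] [Fintype n] [DecidableEq m] [DecidableEq n]
  [CommRing R]

theorem det_one_sub_diagonal_indicator_range_mul {f : m → n} (hf : Function.Injective f)
    (B : Matrix n n R) :
    (1 - Matrix.diagonal ((Set.range f).indicator 1) * B).det = (1 - B.submatrix f f).det := by
  have hD : Matrix.diagonal ((Set.range f).indicator 1) =
      (1 : Matrix n n R).submatrix id f * (1 : Matrix n n R).submatrix f id := by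
    ext i j
    by_cases hi : i ∈ Set.range f
    · obtain ⟨i, rfl⟩ := hi
      simp [Matrix.mul_apply, Matrix.one_apply, Matrix.diagonal_apply, hf.eq_iff, -mul_ite]
    · have hne (x : m) : i ≠ f x := fun h => hi ⟨x, h.symm⟩
      simp [Matrix.mul_apply, Matrix.one_apply, Matrix.diagonal_apply, hi, hne]
  rw [hD, Matrix.mul_assoc, Matrix.det_one_sub_mul_comm]
  congr 2
  ext i j
  simp [Matrix.mul_apply, Matrix.one_apply]

theorem det_one_sub_vecMulVec (u v : n → R) : (1 - Matrix.vecMulVec u v).det = 1 - v ⬝ᵥ u := by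
  rw [Matrix.vecMulVec_eq Unit, Matrix.det_one_sub_mul_comm]
  simp [Matrix.det_unique, Matrix.replicateRow_mul_replicateCol_apply]

end Determinant

section LinearIndependent

variable {F V : Type*} [DivisionRing F] [Fintype F] [AddCommGroup V] [Module F V] [Finite V]

local notation "q" => Fintype.card F

theorem ncard_compl_span_range {k : ℕ} {v : Fin k → V} (hv : LinearIndependent F v) :
    ((Submodule.span F (Set.range v) : Set V)ᶜ).ncard = q ^ finrank F V - q ^ k := by
  rw [Set.ncard_compl, ← Nat.card_coe_set_eq, SetLike.coe_sort_coe,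
    natCard_eq_pow_finrank (K := F) (V := V),
    natCard_eq_pow_finrank (K := F) (V := Submodule.span F (Set.range v)),
    finrank_span_eq_card hv, Nat.card_eq_fintype_card, Fintype.card_fin]

theorem ncard_linearIndependent_and_init_mem {k : ℕ} {S : Set (Fin k → V)}
    (hS : ∀ v ∈ S, LinearIndependent F v) :
    {v : Fin (k + 1) → V | LinearIndependent F v ∧ Fin.init v ∈ S}.ncard =
      S.ncard * (q ^ finrank F V - q ^ k) := by
  have := Fintype.ofFinite S
  let snoc (x : S × V) : Fin (k + 1) → V := Fin.snoc x.1.1 x.2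
  have hsnoc : Function.Injective snoc := by
    rintro ⟨v, x⟩ ⟨v', x'⟩ h
    obtain ⟨hv, hx⟩ := Fin.snoc_inj.1 h
    exact Prod.ext (Subtype.ext hv) hx
  have himage : {v : Fin (k + 1) → V | LinearIndependent F v ∧ Fin.init v ∈ S} =
      snoc '' {x | x.2 ∈ (Submodule.span F (Set.range x.1.1) : Set V)ᶜ} := by
    ext v
    constructor
    · rintro ⟨hv, hvS⟩
      exact ⟨(⟨Fin.init v, hvS⟩, v (Fin.last k)), (linearIndependent_finSucc'.1 hv).2,
        Fin.snoc_init_self v⟩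
    · rintro ⟨⟨v, x⟩, hx, rfl⟩
      exact ⟨linearIndependent_finSnoc.2 ⟨hS v v.2, hx⟩, by simp [snoc]⟩
  rw [himage, Set.ncard_image_of_injective _ hsnoc,
    ncard_setOf_prod fun (v : S) x => x ∈ (Submodule.span F (Set.range v.1) : Set V)ᶜ]
  simp_rw [Set.ofPred_mem_eq, ncard_compl_span_range (hS _ (Subtype.prop _))]
  rw [Finset.sum_const, Finset.card_univ, smul_eq_mul, Set.fintypeCard_eq_ncard]

theorem ncard_linearIndependent_and_castAdd_mem {k : ℕ} {S : Set (Fin k → V)}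
    (hS : ∀ v ∈ S, LinearIndependent F v) (j : ℕ) :
    {v : Fin (k + j) → V | LinearIndependent F v ∧ v ∘ Fin.castAdd j ∈ S}.ncard =
      S.ncard * ∏ i ∈ Finset.range j, (q ^ finrank F V - q ^ (k + i)) := by
  induction j with
  | zero =>
    rw [Finset.prod_range_zero, mul_one]
    exact congrArg Set.ncard (Set.inter_eq_right.2 hS)
  | succ j ih =>
    rw [Finset.prod_range_succ, ← mul_assoc, ← ih,
      ← ncard_linearIndependent_and_init_mem (k := k + j) fun v hv => hv.1]
    congr 1
    ext v
    have hinit (hv : LinearIndependent F v) : LinearIndependent F (Fin.init (n := k + j) v) :=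
      hv.comp _ (Fin.castSucc_injective _)
    exact ⟨fun hv => ⟨hv.1, hinit hv.1, hv.2⟩, fun hv => ⟨hv.1, hv.2.2⟩⟩

theorem ncard_and_not_linearIndependent_pair (P : (Fin 2 → V) → Prop) :
    {v | P v ∧ ¬ LinearIndependent F v}.ncard =
      {b | P ![0, b]}.ncard + ∑ c : F, {a | a ≠ 0 ∧ P ![a, c • a]}.ncard := by
  let pair (x : F × V) : Fin 2 → V := ![x.2, x.1 • x.2]
  have hsplit : {v | P v ∧ ¬ LinearIndependent F v} =
      (![0, ·]) '' {b | P ![0, b]} ∪ pair '' {x | x.2 ≠ 0 ∧ P (pair x)} := by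
    ext v
    constructor
    · rintro ⟨hP, hdep⟩
      obtain ⟨a, b, rfl⟩ : ∃ a b, v = ![a, b] := ⟨v 0, v 1, List.ofFn_inj.1 rfl⟩
      by_cases ha : a = 0
      · subst ha
        exact .inl ⟨b, hP, rfl⟩
      · obtain ⟨c, rfl⟩ : ∃ c : F, c • a = b := by
          simpa [LinearIndependent.pair_iff' ha] using hdep
        exact .inr ⟨(c, a), ⟨ha, hP⟩, rfl⟩
    · rintro (⟨b, hP, rfl⟩ | ⟨⟨c, a⟩, ⟨ha, hP⟩, rfl⟩)
      · exact ⟨hP, fun h => h.ne_zero 0 rfl⟩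
      · exact ⟨hP, fun h => (LinearIndependent.pair_iff' ha).1 h c rfl⟩
  have hdisj : Disjoint ((![0, ·]) '' {b | P ![0, b]}) (pair '' {x | x.2 ≠ 0 ∧ P (pair x)}) := by
    rw [Set.disjoint_left]
    rintro _ ⟨b, -, rfl⟩ ⟨x, hx, h⟩
    exact hx.1 (congrFun h 0)
  have hinj : Function.Injective (![0, ·] : V → Fin 2 → V) := fun b b' h => congrFun h 1
  have hpair : Set.InjOn pair {x | x.2 ≠ 0 ∧ P (pair x)} := by
    rintro ⟨c, a⟩ ⟨ha, -⟩ ⟨c', a'⟩ - h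
    obtain rfl : a = a' := congrFun h 0
    exact Prod.ext (smul_left_injective F ha (congrFun h 1)) rfl
  rw [hsplit, Set.ncard_union_eq hdisj, Set.ncard_image_of_injective _ hinj, hpair.ncard_image,
    ncard_setOf_prod fun c a => a ≠ 0 ∧ P ![a, c • a]]

end LinearIndependent

section Field

variable {F V : Type*} [Field F] [Fintype F] [AddCommGroup V] [Module F V] [Finite V]

local notation "q" => Fintype.card F

theorem ncard_apply_ne {φ : V →ₗ[F] F} (hφ : φ ≠ 0) (c : F) :
    {a | φ a ≠ c}.ncard = q ^ (finrank F V - 1) * (q - 1) := by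
  have hV : finrank F V = finrank F V - 1 + 1 := by
    rw [← Dual.finrank_ker_add_one_of_ne_zero hφ, Nat.add_sub_cancel]
  have hcount := card_mul_ncard_preimage (f := φ.toAddMonoidHom) (LinearMap.surjective hφ) {c}ᶜ
  rw [Set.ncard_compl, Set.ncard_singleton, natCard_eq_pow_finrank (K := F) (V := V), hV, pow_succ',
    mul_assoc, Nat.card_eq_fintype_card] at hcount
  exact Nat.eq_of_mul_eq_mul_left Fintype.card_pos hcount

variable {r : ℕ} {π : V →ₗ[F] Fin r → F}

theorem ncard_isUnit_one_sub_map_smul (hπ : Function.Surjective π) {w : Fin r → F} (hw : w ≠ 0) :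
    {a | IsUnit (1 - Matrix.of fun i => π (w i • a))}.ncard =
      q ^ (finrank F V - 1) * (q - 1) := by
  let φ : V →ₗ[F] F := dotProductBilin F F w ∘ₗ π
  have hφ : φ ≠ 0 := by
    obtain ⟨i, hi⟩ := Function.ne_iff.1 hw
    obtain ⟨a, ha⟩ := hπ (Pi.single i 1)
    intro h
    apply hi
    simpa [φ, ha] using LinearMap.congr_fun h a
  rw [← ncard_apply_ne hφ 1]
  congr 1
  ext a
  have hrank : (Matrix.of fun i => π (w i • a)) = Matrix.vecMulVec w (π a) := by
    ext i j
    simp [Matrix.vecMulVec_apply]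
  rw [Set.mem_ofPred_eq, hrank, Matrix.isUnit_iff_isUnit_det, det_one_sub_vecMulVec,
    isUnit_iff_ne_zero, sub_ne_zero, ne_comm, dotProduct_comm]
  rfl

theorem ncard_ne_zero_and_isUnit_one_sub_map_smul (hπ : Function.Surjective π) {w : Fin r → F}
    (hw : w ≠ 0) :
    {a | a ≠ 0 ∧ IsUnit (1 - Matrix.of fun i => π (w i • a))}.ncard =
      q ^ (finrank F V - 1) * (q - 1) - 1 := by
  have hzero : (Matrix.of fun i => π (w i • 0)) = 0 := by
    ext
    simp
  have hunit : IsUnit (1 - Matrix.of fun i => π (w i • 0)) := by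
    rw [hzero, sub_zero]
    exact isUnit_one
  rw [← ncard_isUnit_one_sub_map_smul hπ hw, ← Set.ncard_sdiff_singleton_of_mem (a := 0) hunit,
    Set.sdiff_eq, Set.inter_comm]
  rfl

theorem ncard_isUnit_one_sub_map (hπ : Function.Surjective π) {m : ℕ} (hV : finrank F V = r + m) :
    {v : Fin r → V | IsUnit (1 - Matrix.of fun i => π (v i))}.ncard =
      q ^ (r * m) * Nat.card (GL (Fin r) F) := by
  let M : (Fin r → V) →+ Matrix (Fin r) (Fin r) F := (π.compLeft (Fin r)).toAddMonoidHom
  have hM : Function.Surjective M := hπ.comp_left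
  have hcount := card_mul_ncard_preimage hM {X | IsUnit (1 - X)}
  have hcardM : Nat.card (Matrix (Fin r) (Fin r) F) = q ^ (r * r) := by
    rw [natCard_eq_pow_finrank (K := F), finrank_matrix]
    simp
  have hcardV : Nat.card (Fin r → V) = q ^ (r * r) * q ^ (r * m) := by
    rw [natCard_eq_pow_finrank (K := F), finrank_pi_fintype]
    simp [hV, ← pow_add, mul_add]
  rw [ncard_isUnit_one_sub_eq_card_units, hcardM, hcardV, mul_assoc] at hcount
  exact Nat.eq_of_mul_eq_mul_left (by positivity) hcount

theorem ncard_isUnit_one_sub_map_and_not_linearIndependent {π : V →ₗ[F] Fin 2 → F}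
    (hπ : Function.Surjective π) :
    {v : Fin 2 → V | IsUnit (1 - Matrix.of fun i => π (v i)) ∧ ¬ LinearIndependent F v}.ncard =
      q ^ (finrank F V - 1) * (q - 1) + q * (q ^ (finrank F V - 1) * (q - 1) - 1) := by
  have hfirst (b : V) : ![0, b] = fun i => (![0, 1] : Fin 2 → F) i • b := by
    ext i
    fin_cases i <;> simp
  have hsecond (c : F) (a : V) : ![a, c • a] = fun i => (![1, c] : Fin 2 → F) i • a := by
    ext i
    fin_cases i <;> simp
  rw [ncard_and_not_linearIndependent_pair]
  simp_rw [hfirst, hsecond, ncard_isUnit_one_sub_map_smul hπ (w := ![0, 1]) (by simp),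
    ncard_ne_zero_and_isUnit_one_sub_map_smul hπ (w := ![1, _]) (by simp)]
  rw [Finset.sum_const, Finset.card_univ, smul_eq_mul]

theorem ncard_isUnit_one_sub_map_and_linearIndependent {π : V →ₗ[F] Fin 2 → F}
    (hπ : Function.Surjective π) {m : ℕ} (hV : finrank F V = 2 + m) :
    ({v : Fin 2 → V | IsUnit (1 - Matrix.of fun i => π (v i)) ∧ LinearIndependent F v}.ncard : ℤ) =
      (q : ℤ) ^ (2 * m) * ((q ^ 2 - 1) * (q ^ 2 - q)) -
        ((q + 1) * (q ^ (m + 1) * (q - 1)) - q) := by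
  have hsplit :
      {v : Fin 2 → V | IsUnit (1 - Matrix.of fun i => π (v i)) ∧ LinearIndependent F v}.ncard +
        {v : Fin 2 → V | IsUnit (1 - Matrix.of fun i => π (v i)) ∧ ¬ LinearIndependent F v}.ncard =
      {v : Fin 2 → V | IsUnit (1 - Matrix.of fun i => π (v i))}.ncard :=
    Set.ncard_inter_add_ncard_sdiff_eq_ncard _ _
  have hq : 1 < q := Fintype.one_lt_card
  have hGL : (Nat.card (GL (Fin 2) F) : ℤ) = (q ^ 2 - 1) * (q ^ 2 - q) := by
    rw [Matrix.card_GL_field, Fin.prod_univ_two, Nat.cast_mul,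
      Nat.cast_sub (Nat.pow_le_pow_right hq.le (by simp)),
      Nat.cast_sub (Nat.pow_le_pow_right hq.le (by simp))]
    simp
  have hN : 1 ≤ q ^ (m + 1) * (q - 1) := Nat.mul_pos (by positivity) (by omega)
  rw [ncard_isUnit_one_sub_map_and_not_linearIndependent hπ, ncard_isUnit_one_sub_map hπ hV, hV,
    show 2 + m - 1 = m + 1 by omega] at hsplit
  zify [hN, hq.le] at hsplit
  rw [hGL] at hsplit
  linear_combination hsplit

theorem ncard_isUnit_and_isUnit_sub_diagonal (r m : ℕ) :
    {A : Matrix (Fin (r + m)) (Fin (r + m)) F | IsUnit A ∧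
        IsUnit (A - Matrix.diagonal fun i : Fin (r + m) => if (i : ℕ) < r then 1 else 0)}.ncard =
      {v : Fin r → Fin (r + m) → F |
        IsUnit (1 - Matrix.of fun i => LinearMap.funLeft F F (Fin.castAdd m) (v i)) ∧
          LinearIndependent F v}.ncard * ∏ k ∈ Finset.Ico r (r + m), (q ^ (r + m) - q ^ k) := by
  set S := {v : Fin r → Fin (r + m) → F |
    IsUnit (1 - Matrix.of fun i => LinearMap.funLeft F F (Fin.castAdd m) (v i)) ∧
      LinearIndependent F v}
  have hD : (fun i : Fin (r + m) => if (i : ℕ) < r then (1 : F) else 0) =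
      (Set.range (Fin.castAdd m)).indicator 1 := by
    classical
    ext i
    have hrange : Set.range (Fin.castAdd m) = {i : Fin (r + m) | (i : ℕ) < r} :=
      Fin.range_castLE (Nat.le_add_right r m)
    simp [Set.indicator_apply, hrange]
  have hext := ncard_linearIndependent_and_castAdd_mem (S := S) (fun v hv => hv.2) m
  rw [finrank_fin_fun] at hext
  rw [hD, ncard_isUnit_and_isUnit_sub, Finset.prod_Ico_eq_prod_range, Nat.add_sub_cancel_left,
    ← hext]
  congr 1
  ext B
  have hrows : IsUnit B ↔ LinearIndependent F B.row := Matrix.linearIndependent_rows_iff_isUnit.symm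
  have htop (hB : LinearIndependent F B.row) : LinearIndependent F (B.row ∘ Fin.castAdd m) :=
    hB.comp _ (Fin.castAdd_injective r m)
  rw [Set.mem_ofPred_eq, hrows, Matrix.isUnit_iff_isUnit_det (1 - _),
    det_one_sub_diagonal_indicator_range_mul (Fin.castAdd_injective r m),
    ← Matrix.isUnit_iff_isUnit_det]
  exact ⟨fun h => ⟨h.1, h.2, htop h.1⟩, fun h => ⟨h.1, h.2.1⟩⟩

end Field

/-- For a finite field `F` with `q` elements, `n ≥ 2`, and `D = diag{1,1,0,…,0}`,
the number of matrices `A` such that both `A` and `A - D` are invertible (equivalently,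
`|(D + GL_n(F)) ∩ GL_n(F)|`) equals
`(q^(2n) - q^(2n-1) - q^(2n-2) + q^(2n-3) + q^(n-1) - q^(n+1) + q) · ∏_{k=2}^{n-1} (q^n - q^k)`. -/
theorem card_unit_and_unit_sub_diag (F : Type*) [Field F] [Fintype F]
    (n : ℕ) (hn : 2 ≤ n) :
    (({A : Matrix (Fin n) (Fin n) F |
        IsUnit A ∧
          IsUnit (A - Matrix.diagonal (fun i : Fin n => if (i : ℕ) < 2 then (1 : F) else 0))}.ncard
      : ℤ)) =
      ((Fintype.card F : ℤ) ^ (2 * n) - (Fintype.card F : ℤ) ^ (2 * n - 1)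
          - (Fintype.card F : ℤ) ^ (2 * n - 2) + (Fintype.card F : ℤ) ^ (2 * n - 3)
          + (Fintype.card F : ℤ) ^ (n - 1) - (Fintype.card F : ℤ) ^ (n + 1)
          + (Fintype.card F : ℤ)) *
        ∏ k ∈ Finset.Icc 2 (n - 1), ((Fintype.card F : ℤ) ^ n - (Fintype.card F : ℤ) ^ k) := by
  obtain ⟨m, rfl⟩ := Nat.exists_eq_add_of_le hn
  have hπ : Function.Surjective (LinearMap.funLeft F F (Fin.castAdd (n := 2) m)) :=
    LinearMap.funLeft_surjective_of_injective F F _ (Fin.castAdd_injective 2 m)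
  rw [ncard_isUnit_and_isUnit_sub_diagonal, Nat.cast_mul,
    ncard_isUnit_one_sub_map_and_linearIndependent hπ (finrank_fin_fun F),
    cast_prod_pow_sub_pow Fintype.card_pos, Finset.Icc_sub_one_right_eq_Ico_of_not_isMin (by simp)]
  congr 1
  rw [show 2 * (2 + m) - 1 = 2 * m + 3 by omega, show 2 * (2 + m) - 2 = 2 * m + 2 by omega,
    show 2 * (2 + m) - 3 = 2 * m + 1 by omega, show 2 + m - 1 = m + 1 by omega]
  ring
end

section
/- Let F be a finite field and n a positive integer. For any two adjacent vertices A and B of the unitary Cayley graph Cay(M_n(F), GL_n(F)), the number of common neighbors of A and B equals e_n, the number of linear derangements in M_n(F), i.e., the number of matrices X ∈ M_n(F) such that both X and X − I_n are invertible. -/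
/-- The unitary Cayley graph `Cay(M_n(F), GL_n(F))`: vertices are the `n × n`
matrices over `F`, and two matrices `A`, `B` are adjacent iff `A - B` is invertible. -/
def unitaryCayley (F : Type*) [Field F] (n : ℕ) :
    SimpleGraph (Matrix (Fin n) (Fin n) F) where
  Adj A B := A ≠ B ∧ IsUnit (A - B)
  symm := ⟨fun A B h => ⟨h.1.symm, by rw [← neg_sub]; exact h.2.neg⟩⟩
  loopless := ⟨fun A h => h.1 rfl⟩

/-!
For a unit `u` of a ring, `x ↦ a - u * x` is an automorphism of the unitary Cayley graph. When `a`
and `b` are adjacent, taking `u = a - b` moves the edge from `0` to `1` onto the edge from `a` to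
`b`, so it carries the common neighbors of `0` and `1`, the linear derangements, onto those of `a`
and `b`.
-/

/-- The unitary Cayley graph of a ring `R`, on the additive group of `R` with the units of `R` as
connection set. It extends `unitaryCayley` from matrix rings over a field to all rings. -/
def ringUnitaryCayley (R : Type*) [Ring R] : SimpleGraph R :=
  SimpleGraph.addCayley {r | IsUnit r}

theorem image_commonNeighbors_iso {V W : Type*} {G : SimpleGraph V} {H : SimpleGraph W}
    (f : G ≃g H) (v w : V) :
    f '' G.commonNeighbors v w = H.commonNeighbors (f v) (f w) := by
  simp only [SimpleGraph.commonNeighbors, Set.image_inter f.injective,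
    SimpleGraph.Iso.image_neighborSet]

namespace ringUnitaryCayley

variable {R : Type*} [Ring R]

theorem adj_iff {a b : R} : (ringUnitaryCayley R).Adj a b ↔ a ≠ b ∧ IsUnit (a - b) := by
  rw [ringUnitaryCayley, SimpleGraph.addCayley_adj, Set.mem_ofPred_eq, Set.mem_ofPred_eq,
    neg_add_eq_sub, neg_add_eq_sub, IsUnit.sub_iff, or_self]

theorem adj_iff_isUnit [Nontrivial R] {a b : R} :
    (ringUnitaryCayley R).Adj a b ↔ IsUnit (a - b) :=
  adj_iff.trans (and_iff_right_of_imp fun h => sub_ne_zero.mp h.ne_zero)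

/-- The automorphism `x ↦ a - u * x` of the unitary Cayley graph, sending `0` to `a` and `1` to
`a - u`. -/
def subMulLeftIso (a : R) (u : Rˣ) : ringUnitaryCayley R ≃g ringUnitaryCayley R where
  toEquiv := u.mulLeft.trans (Equiv.subLeft a)
  map_rel_iff' {x y} := by
    have hsub : a - u * x - (a - u * y) = u * (y - x) := by noncomm_ring
    simp [adj_iff, hsub, IsUnit.sub_iff]

@[simp]
theorem subMulLeftIso_apply (a : R) (u : Rˣ) (x : R) : subMulLeftIso a u x = a - u * x :=
  rfl

theorem commonNeighbors_zero_one [Nontrivial R] :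
    (ringUnitaryCayley R).commonNeighbors 0 1 = {x | IsUnit x ∧ IsUnit (x - 1)} := by
  ext x
  rw [SimpleGraph.mem_commonNeighbors, adj_iff_isUnit, adj_iff_isUnit, zero_sub, IsUnit.neg_iff,
    IsUnit.sub_iff, Set.mem_ofPred_eq]

end ringUnitaryCayley

theorem unitaryCayley_eq_ringUnitaryCayley (F : Type*) [Field F] (n : ℕ) :
    unitaryCayley F n = ringUnitaryCayley (Matrix (Fin n) (Fin n) F) := by
  ext A B
  exact ringUnitaryCayley.adj_iff.symm

theorem card_commonNeighbors_of_adj_general {R : Type*} [Ring R] {a b : R}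
    (hadj : (ringUnitaryCayley R).Adj a b) :
    Cardinal.mk ((ringUnitaryCayley R).commonNeighbors a b) =
      Cardinal.mk {x : R | IsUnit x ∧ IsUnit (x - 1)} := by
  obtain ⟨hne, u, hu⟩ := ringUnitaryCayley.adj_iff.mp hadj
  have : Nontrivial R := ⟨a, b, hne⟩
  let f := ringUnitaryCayley.subMulLeftIso a u
  have hf₀ : f 0 = a := by simp [f]
  have hf₁ : f 1 = b := by simp [f, hu]
  rw [← ringUnitaryCayley.commonNeighbors_zero_one, ← hf₀, ← hf₁, ← image_commonNeighbors_iso,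
    Cardinal.mk_image_eq f.injective]

/-- For any two adjacent vertices `A`, `B` of `Cay(M_n(F), GL_n(F))`, the number of their
common neighbors equals `eₙ`, the number of linear derangements, i.e. the number of
matrices `X ∈ M_n(F)` with both `X` and `X - Iₙ` invertible. -/
theorem card_commonNeighbors_of_adj (F : Type*) [Field F] [Fintype F]
    (n : ℕ) (hn : 0 < n) (A B : Matrix (Fin n) (Fin n) F)
    (hadj : (unitaryCayley F n).Adj A B) :
    ((unitaryCayley F n).commonNeighbors A B).ncard =
      {X : Matrix (Fin n) (Fin n) F | IsUnit X ∧ IsUnit (X - 1)}.ncard := by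
  rw [unitaryCayley_eq_ringUnitaryCayley] at hadj ⊢
  exact congrArg Cardinal.toNat (card_commonNeighbors_of_adj_general hadj)
end

section
/- Let F be a finite field with q elements, n ≥ 2 an integer, and let A_1 ∈ M_2(F) be a fixed invertible 2×2 matrix. The number of invertible matrices A ∈ GL_n(F) whose 2nd leading principal submatrix (the upper-left 2×2 block) equals A_1 is q^(2n−4) · ∏_{k=2}^{n−1} (q^n − q^k). -/
/-! Permuting rows and columns moves the prescribed invertible block `A` into the upper-left corner
of `M = [A, B; C, D]`. Then `M` is invertible exactly when the Schur complement `D - C A⁻¹ B` is,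
so `M` amounts to a free choice of `B`, of `C` and of an invertible Schur complement. This gives
`q^(2r(n - r)) * |GL_{n-r}(F)|` matrices for a block of size `r`, and half of the power of `q` is
absorbed by multiplying each of the `n - r` factors `q^(n - r) - q^k` of `|GL_{n-r}(F)|` by
`q^r`. -/

open Matrix Finset

theorem natCard_matrix {l m : Type*} [Fintype l] [Fintype m] (α : Type*) :
    Nat.card (Matrix l m α) = Nat.card α ^ (Fintype.card l * Fintype.card m) := by
  rw [← Nat.card_congr (Matrix.of (m := l) (n := m) (α := α)), Nat.card_fun, Nat.card_fun,
    ← pow_mul, mul_comm, Nat.card_eq_fintype_card (α := l), Nat.card_eq_fintype_card (α := m)]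

section SchurComplement

variable {R l m n : Type*} [CommRing R] [Fintype l] [Fintype m] [Fintype n]
  [DecidableEq l] [DecidableEq m] [DecidableEq n]

/-- The parametrization of the invertible block matrices with a given invertible upper-left block
by their upper-right block, their lower-left block and their Schur complement. -/
noncomputable def schurComplementEquiv (A : Matrix l l R) [Invertible A] :
    Matrix l m R × Matrix m l R × GL m R ≃
      {M : Matrix (l ⊕ m) (l ⊕ m) R // IsUnit M ∧ M.toBlocks₁₁ = A} where
  toFun p := ⟨fromBlocks A p.1 p.2.1 ((p.2.2 : Matrix m m R) + p.2.1 * ⅟A * p.1),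
    by simp [isUnit_fromBlocks_iff_of_invertible₁₁]⟩
  invFun M := (M.1.toBlocks₁₂, M.1.toBlocks₂₁, IsUnit.unit
    (a := M.1.toBlocks₂₂ - M.1.toBlocks₂₁ * ⅟A * M.1.toBlocks₁₂) <| by
      obtain ⟨M, hM, rfl⟩ := M
      rwa [← isUnit_fromBlocks_iff_of_invertible₁₁, fromBlocks_toBlocks])
  left_inv p := by
    ext <;> simp
  right_inv := by
    rintro ⟨M, hM, rfl⟩
    simpa using fromBlocks_toBlocks M

theorem natCard_isUnit_and_toBlocks₁₁_eq {A : Matrix l l R} (hA : IsUnit A) :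
    Nat.card {M : Matrix (l ⊕ m) (l ⊕ m) R // IsUnit M ∧ M.toBlocks₁₁ = A} =
      Nat.card R ^ (2 * (Fintype.card l * Fintype.card m)) * Nat.card (GL m R) := by
  have := hA.invertible
  rw [← Nat.card_congr (schurComplementEquiv A), Nat.card_prod, Nat.card_prod, natCard_matrix,
    natCard_matrix, mul_comm (Fintype.card m), ← mul_assoc, ← pow_add, ← two_mul]

theorem natCard_isUnit_and_submatrix_eq (e₁ e₂ : l ⊕ m ≃ n) {A : Matrix l l R} (hA : IsUnit A) :
    Nat.card {M : Matrix n n R // IsUnit M ∧ M.submatrix (e₁ ∘ Sum.inl) (e₂ ∘ Sum.inl) = A} =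
      Nat.card R ^ (2 * (Fintype.card l * Fintype.card m)) * Nat.card (GL m R) := by
  rw [← natCard_isUnit_and_toBlocks₁₁_eq hA]
  refine Nat.card_congr ((reindex e₁.symm e₂.symm).subtypeEquiv fun M => ?_)
  rw [reindex_apply, isUnit_submatrix_equiv]
  rfl

end SchurComplement

theorem exists_sum_fin_equiv_of_injective {α β : Type*} [Fintype α] [Fintype β] {f : α → β}
    (hf : f.Injective) :
    ∃ e : α ⊕ Fin (Fintype.card β - Fintype.card α) ≃ β, e ∘ Sum.inl = f := by
  classical
  have card_compl : Fintype.card ↥(Set.range f)ᶜ = Fintype.card β - Fintype.card α := by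
    rw [Fintype.card_compl_set, Set.card_range_of_injective hf]
  exact ⟨((Equiv.ofInjective f hf).sumCongr (Fintype.equivFinOfCardEq card_compl).symm).trans
    (Equiv.Set.sumCompl (Set.range f)), rfl⟩

theorem prod_Ico_pow_sub_pow {R : Type*} [CommRing R] (q : R) (r m : ℕ) :
    ∏ k ∈ Ico r (r + m), (q ^ (r + m) - q ^ k) =
      q ^ (r * m) * ∏ k ∈ range m, (q ^ m - q ^ k) := by
  simp only [prod_Ico_eq_prod_range, Nat.add_sub_cancel_left, pow_add, ← mul_sub,
    prod_mul_distrib, prod_const, card_range, pow_mul]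

theorem intCast_natCard_GL (F : Type*) [Field F] [Fintype F] (m : ℕ) :
    (Nat.card (GL (Fin m) F) : ℤ) =
      ∏ k ∈ range m, ((Fintype.card F : ℤ) ^ m - (Fintype.card F : ℤ) ^ k) := by
  rw [card_GL_field, Nat.cast_prod, prod_range]
  refine prod_congr rfl fun k _ => ?_
  rw [Nat.cast_sub (Nat.pow_le_pow_right Fintype.card_pos k.is_lt.le), Nat.cast_pow, Nat.cast_pow]

theorem card_invertible_with_principal_submatrix_general {F l n : Type*} [Field F] [Fintype F]
    [Fintype l] [Fintype n] [DecidableEq l] [DecidableEq n] {f g : l → n} (hf : f.Injective)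
    (hg : g.Injective) {A : Matrix l l F} (hA : IsUnit A) :
    ({M : Matrix n n F | IsUnit M ∧ M.submatrix f g = A}.ncard : ℤ) =
      (Fintype.card F : ℤ) ^ (Fintype.card l * (Fintype.card n - Fintype.card l)) *
        ∏ k ∈ Ico (Fintype.card l) (Fintype.card n),
          ((Fintype.card F : ℤ) ^ Fintype.card n - (Fintype.card F : ℤ) ^ k) := by
  obtain ⟨m, hm⟩ := Nat.exists_eq_add_of_le (Fintype.card_le_of_injective f hf)
  obtain ⟨e₁, rfl⟩ := exists_sum_fin_equiv_of_injective hf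
  obtain ⟨e₂, rfl⟩ := exists_sum_fin_equiv_of_injective hg
  rw [← Nat.card_coe_set_eq, Set.coe_ofPred, natCard_isUnit_and_submatrix_eq e₁ e₂ hA, hm,
    Nat.add_sub_cancel_left, Fintype.card_fin, prod_Ico_pow_sub_pow, Nat.cast_mul,
    intCast_natCard_GL, Nat.card_eq_fintype_card, Nat.cast_pow]
  ring

/-- For a finite field `F` with `q` elements, `n ≥ 2`, and a fixed invertible `2 × 2`
matrix `A₁`, the number of invertible `n × n` matrices whose upper-left `2 × 2` block
equals `A₁` is `q^(2n-4) · ∏_{k=2}^{n-1} (qⁿ - qᵏ)`. -/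
theorem card_invertible_with_principal_submatrix (F : Type*) [Field F] [Fintype F]
    (n : ℕ) (hn : 2 ≤ n) (A₁ : Matrix (Fin 2) (Fin 2) F) (hA₁ : IsUnit A₁) :
    (({A : Matrix (Fin n) (Fin n) F |
        IsUnit A ∧ ∀ i j : Fin 2, A (Fin.castLE hn i) (Fin.castLE hn j) = A₁ i j}.ncard : ℤ)) =
      (Fintype.card F : ℤ) ^ (2 * n - 4) *
        ∏ k ∈ Finset.Icc 2 (n - 1), ((Fintype.card F : ℤ) ^ n - (Fintype.card F : ℤ) ^ k) := by
  have Icc_eq_Ico : Icc 2 (n - 1) = Ico 2 n := by grind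
  simpa [← Matrix.ext_iff, Nat.mul_sub, Icc_eq_Ico] using
    card_invertible_with_principal_submatrix_general (Fin.castLE_injective hn)
      (Fin.castLE_injective hn) hA₁
end

section
/- Let F be a finite field with q elements, n > 2 an integer, let E_11 be the n×n matrix with 1 in position (1,1) and 0 elsewhere, and let D = diag{1,1,0,…,0}. In the unitary Cayley graph Cay(M_n(F), GL_n(F)), the zero matrix 0 is non-adjacent to both E_11 and D, and the number of common neighbors of E_11 and 0 differs from the number of common neighbors of D and 0. -/
/-!
Let `D` be the diagonal projection onto the coordinates `f k`, and let `C` be invertible. By the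
matrix determinant lemma, `D - C` is singular iff the principal block of `C⁻¹` on these coordinates
has eigenvalue `1`. After inverting `C`, it remains to show that fewer invertible `g` satisfy
`g a a = 1` than `(1 - g a a) * (1 - g b b) = g a b * g b a`. If column `b` of the `2 × 2` block is
not `(0, 1)`, subtracting `g b a` times column `b` from column `a` sends solutions of the first
equation injectively to solutions of the second. If it is `(0, 1)`, the second equation always
holds, whereas the first fails for some `g` because there is a third coordinate.
-/

open Matrix

theorem diagonal_indicator_range {ι κ R : Type*} [DecidableEq ι] [Fintype κ] [NonAssocSemiring R]
    {f : κ → ι} (hf : Function.Injective f) :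
    diagonal ((Set.range f).indicator 1) =
      (1 : Matrix ι ι R).submatrix id f * (1 : Matrix ι ι R).submatrix f id := by
  ext i j
  by_cases hi : i ∈ Set.range f
  · obtain ⟨k, rfl⟩ := hi
    rw [mul_apply, Finset.sum_eq_single k]
    · simp [one_apply, diagonal_apply]
    · intro l _ hlk
      simp [hf.eq_iff, hlk.symm, one_apply]
    · simp
  · have hne (k : κ) : i ≠ f k := fun h => hi ⟨k, h.symm⟩
    simp [mul_apply, one_apply, hne, hi, diagonal_apply]

section Blocks

variable {ι κ R : Type*} [Fintype ι] [DecidableEq ι] [Fintype κ] [DecidableEq κ] [CommRing R]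

theorem isUnit_mul_sub_coe_iff (U : Matrix ι κ R) (V : Matrix κ ι R) (g : GL ι R) :
    IsUnit (U * V - (g : Matrix ι ι R)) ↔
      IsUnit (1 - V * (↑g⁻¹ : Matrix ι ι R) * U) := by
  have hg : IsUnit (g : Matrix ι ι R).det := isUnits_det_units g
  have hdet : ((g : Matrix ι ι R) - U * V).det =
      (g : Matrix ι ι R).det * (1 - V * (↑g⁻¹ : Matrix ι ι R) * U).det := by
    simpa only [Matrix.neg_mul, Matrix.mul_neg, ← sub_eq_add_neg, coe_units_inv] using
      det_add_mul (-U) V hg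
  rw [← IsUnit.neg_iff, neg_sub, isUnit_iff_isUnit_det, hdet, IsUnit.mul_iff, and_iff_right hg,
    ← isUnit_iff_isUnit_det]

theorem isUnit_diagonal_indicator_range_sub_coe_iff {f : κ → ι} (hf : Function.Injective f)
    (g : GL ι R) :
    IsUnit (diagonal ((Set.range f).indicator 1) - (g : Matrix ι ι R)) ↔
      IsUnit (1 - (↑g⁻¹ : Matrix ι ι R).submatrix f f) := by
  rw [diagonal_indicator_range hf, isUnit_mul_sub_coe_iff]
  have hblock : (1 : Matrix ι ι R).submatrix f id * (↑g⁻¹ : Matrix ι ι R) *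
      (1 : Matrix ι ι R).submatrix id f = (↑g⁻¹ : Matrix ι ι R).submatrix f f := by
    ext i j
    simp [mul_apply, one_apply]
  rw [hblock]

theorem not_isUnit_diagonal_indicator [Nontrivial R] {s : Set ι} {i : ι} (hi : i ∉ s) :
    ¬ IsUnit (diagonal (s.indicator (1 : ι → R))) := fun h => by
  simpa [hi] using Pi.isUnit_iff.1 (isUnit_diagonal.1 h) i

/-- The invertible matrices whose principal block on the coordinates `f k` has eigenvalue `1`,
written as the vanishing of a determinant so that it makes sense over any commutative ring. -/
def eigenvalueOneBlock (R : Type*) [CommRing R] (f : κ → ι) : Set (GL ι R) :=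
  {g | (1 - (g : Matrix ι ι R).submatrix f f).det = 0}

theorem mem_eigenvalueOneBlock_singleton {a : ι} {g : GL ι R} :
    g ∈ eigenvalueOneBlock R ![a] ↔ g a a = 1 := by
  simp only [eigenvalueOneBlock, Set.mem_ofPred_eq, det_fin_one, Matrix.sub_apply, one_apply_eq,
    submatrix_apply, cons_val_zero, sub_eq_zero, @eq_comm R 1]

theorem mem_eigenvalueOneBlock_pair {a b : ι} {g : GL ι R} :
    g ∈ eigenvalueOneBlock R ![a, b] ↔ (1 - g a a) * (1 - g b b) = g a b * g b a := by
  simp [eigenvalueOneBlock, det_fin_two, Matrix.sub_apply, sub_eq_zero, -submatrix_cons_row]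

end Blocks

section ColumnShear

variable {ι R : Type*} [Fintype ι] [DecidableEq ι] [CommRing R] {a b : ι}

/-- The column operation subtracting `g b a` times column `b` from column `a`. -/
def shearColumn (hba : b ≠ a) (g : GL ι R) : GL ι R :=
  g * (SpecialLinearGroup.transvection hba (-g b a) : GL ι R)

theorem coe_shearColumn (hba : b ≠ a) (g : GL ι R) :
    (shearColumn hba g : Matrix ι ι R) = g * transvection b a (-g b a) :=
  rfl

theorem shearColumn_apply_left (hba : b ≠ a) (g : GL ι R) (i : ι) :
    shearColumn hba g i a = g i a - g b a * g i b := by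
  rw [coe_shearColumn, mul_transvection_apply_same, neg_mul, sub_eq_add_neg]

theorem shearColumn_apply_right (hba : b ≠ a) (g : GL ι R) (i : ι) :
    shearColumn hba g i b = g i b := by
  rw [coe_shearColumn, mul_transvection_apply_of_ne _ _ _ _ hba]

/-- The invertible matrices for which column `b` of the block on `{a, b}` is the corresponding
column of the identity. -/
def trivialColumn (R : Type*) [CommRing R] (a b : ι) : Set (GL ι R) :=
  {g | g a b = 0 ∧ g b b = 1}

theorem trivialColumn_subset_eigenvalueOneBlock :
    trivialColumn R a b ⊆ eigenvalueOneBlock R ![a, b] := by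
  rintro g ⟨hab, hbb⟩
  rw [mem_eigenvalueOneBlock_pair, hab, hbb, sub_self, mul_zero, zero_mul]

theorem shearColumn_mapsTo (hba : b ≠ a) :
    Set.MapsTo (shearColumn hba) (eigenvalueOneBlock R ![a] \ trivialColumn R a b)
      (eigenvalueOneBlock R ![a, b] \ trivialColumn R a b) := by
  rintro g ⟨haa, hg⟩
  rw [mem_eigenvalueOneBlock_singleton] at haa
  refine ⟨mem_eigenvalueOneBlock_pair.2 ?_, ?_⟩
  · simp only [shearColumn_apply_left, shearColumn_apply_right, haa]
    ring
  · simpa only [trivialColumn, Set.mem_ofPred_eq, shearColumn_apply_right] using hg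

theorem shearColumn_injOn [NoZeroDivisors R] (hba : b ≠ a) :
    Set.InjOn (shearColumn hba) (eigenvalueOneBlock R ![a] \ trivialColumn R a b) := by
  rintro g ⟨hg, hgt⟩ h ⟨hh, -⟩ hgh
  rw [mem_eigenvalueOneBlock_singleton] at hg hh
  have entry (i j : ι) : shearColumn hba g i j = shearColumn hba h i j := by rw [hgh]
  have hab : g a b = h a b := by simpa only [shearColumn_apply_right] using entry a b
  have hbb : g b b = h b b := by simpa only [shearColumn_apply_right] using entry b b
  have entry_aa := entry a a
  have entry_ba := entry b a
  simp only [shearColumn_apply_left, hg, hh, ← hab, ← hbb] at entry_aa entry_ba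
  have hmul : (g b a - h b a) * g a b = 0 := by linear_combination -entry_aa
  have hmul_one_sub : (g b a - h b a) * (1 - g b b) = 0 := by linear_combination entry_ba
  have hcoeff : g b a = h b a := by
    by_contra hne
    have hsub : g b a - h b a ≠ 0 := sub_ne_zero.2 hne
    exact hgt ⟨(mul_eq_zero.1 hmul).resolve_left hsub,
      (sub_eq_zero.1 ((mul_eq_zero.1 hmul_one_sub).resolve_left hsub)).symm⟩
  rw [shearColumn, shearColumn, hcoeff] at hgh
  exact mul_right_cancel hgh

theorem exists_mem_trivialColumn_notMem_eigenvalueOneBlock [Nontrivial R] {c : ι} (hba : b ≠ a)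
    (hca : c ≠ a) (hcb : c ≠ b) : ∃ g ∈ trivialColumn R a b, g ∉ eigenvalueOneBlock R ![a] := by
  obtain ⟨g, hg⟩ := (Group.isUnit (Equiv.swap a c)).map (permMatrixHom (R := R))
  refine ⟨g, ⟨?_, ?_⟩, fun h => ?_⟩
  · simp [hg, Equiv.Perm.permMatrix, PEquiv.toMatrix_apply, hcb]
  · simp [hg, Equiv.Perm.permMatrix, PEquiv.toMatrix_apply,
      Equiv.swap_apply_of_ne_of_ne hba hcb.symm]
  · rw [mem_eigenvalueOneBlock_singleton] at h
    simp [hg, Equiv.Perm.permMatrix, PEquiv.toMatrix_apply, hca] at h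

theorem ncard_eigenvalueOneBlock_singleton_lt_pair [IsDomain R] [Finite R] {c : ι} (hba : b ≠ a)
    (hca : c ≠ a) (hcb : c ≠ b) :
    (eigenvalueOneBlock R ![a]).ncard < (eigenvalueOneBlock R ![a, b]).ncard := by
  have hdiff : (eigenvalueOneBlock R ![a] \ trivialColumn R a b).ncard ≤
      (eigenvalueOneBlock R ![a, b] \ trivialColumn R a b).ncard :=
    Set.ncard_le_ncard_of_injOn _ (shearColumn_mapsTo hba) (shearColumn_injOn hba)
  have hinter : (eigenvalueOneBlock R ![a] ∩ trivialColumn R a b).ncard <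
      (eigenvalueOneBlock R ![a, b] ∩ trivialColumn R a b).ncard := by
    obtain ⟨g, hgt, hg⟩ :=
      exists_mem_trivialColumn_notMem_eigenvalueOneBlock (R := R) hba hca hcb
    rw [Set.inter_eq_right.2 trivialColumn_subset_eigenvalueOneBlock]
    exact Set.ncard_lt_ncard ⟨Set.inter_subset_right, fun h => hg (h hgt).1⟩
  rw [← Set.ncard_inter_add_ncard_sdiff_eq_ncard (eigenvalueOneBlock R ![a]) (trivialColumn R a b),
    ← Set.ncard_inter_add_ncard_sdiff_eq_ncard (eigenvalueOneBlock R ![a, b]) (trivialColumn R a b)]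
  exact add_lt_add_of_lt_of_le hinter hdiff

end ColumnShear

namespace unitaryCayley

variable {F : Type*} [Field F] {n : ℕ}

theorem not_adj_zero {A : Matrix (Fin n) (Fin n) F} (hA : ¬ IsUnit A) :
    ¬ (unitaryCayley F n).Adj A 0 :=
  fun h => hA (sub_zero A ▸ h.2)

theorem mem_commonNeighbors_zero {A C : Matrix (Fin n) (Fin n) F} (hA : ¬ IsUnit A) :
    C ∈ (unitaryCayley F n).commonNeighbors A 0 ↔ IsUnit C ∧ IsUnit (A - C) := by
  simp only [SimpleGraph.mem_commonNeighbors, unitaryCayley, zero_sub, IsUnit.neg_iff]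
  refine ⟨fun ⟨⟨_, hAC⟩, _, hC⟩ => ⟨hC, hAC⟩, fun ⟨hC, hAC⟩ => ⟨⟨?_, hAC⟩, ?_, hC⟩⟩
  · rintro rfl
    exact hA hC
  · rintro rfl
    exact hA (sub_zero A ▸ hAC)

theorem commonNeighbors_diagonal_indicator_range {κ : Type*} [Fintype κ] [DecidableEq κ]
    {f : κ → Fin n} (hf : Function.Injective f) {i : Fin n} (hi : i ∉ Set.range f) :
    (unitaryCayley F n).commonNeighbors (diagonal ((Set.range f).indicator 1)) 0 =
      (fun g : GL (Fin n) F => (↑g⁻¹ : Matrix (Fin n) (Fin n) F)) ''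
        (eigenvalueOneBlock F f)ᶜ := by
  have hblock (g : GL (Fin n) F) : g⁻¹ ∈ (eigenvalueOneBlock F f)ᶜ ↔
      IsUnit (diagonal ((Set.range f).indicator 1) - (g : Matrix (Fin n) (Fin n) F)) := by
    rw [isUnit_diagonal_indicator_range_sub_coe_iff hf, isUnit_iff_isUnit_det,
      isUnit_iff_ne_zero]
    rfl
  ext C
  rw [mem_commonNeighbors_zero (not_isUnit_diagonal_indicator hi)]
  constructor
  · rintro ⟨⟨g, rfl⟩, hg⟩
    exact ⟨g⁻¹, (hblock g).2 hg, by simp only [inv_inv]⟩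
  · rintro ⟨g, hg, rfl⟩
    exact ⟨g⁻¹.isUnit, (hblock g⁻¹).1 (by rwa [inv_inv])⟩

theorem ncard_commonNeighbors_diagonal_indicator_range {κ : Type*} [Fintype κ] [DecidableEq κ]
    {f : κ → Fin n} (hf : Function.Injective f) {i : Fin n} (hi : i ∉ Set.range f) :
    ((unitaryCayley F n).commonNeighbors (diagonal ((Set.range f).indicator 1)) 0).ncard =
      (eigenvalueOneBlock F f)ᶜ.ncard := by
  rw [commonNeighbors_diagonal_indicator_range hf hi]
  exact Set.ncard_image_of_injective _ (Units.val_injective.comp inv_injective)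

theorem ncard_commonNeighbors_pair_lt_singleton [Finite F] {a b c : Fin n} (hba : b ≠ a)
    (hca : c ≠ a) (hcb : c ≠ b) :
    ((unitaryCayley F n).commonNeighbors
        (diagonal (({a, b} : Set (Fin n)).indicator 1)) 0).ncard <
      ((unitaryCayley F n).commonNeighbors
        (diagonal (({a} : Set (Fin n)).indicator 1)) 0).ncard := by
  have hlt := ncard_eigenvalueOneBlock_singleton_lt_pair (R := F) hba hca hcb
  have hinj : Function.Injective ![a, b] := by
    simpa [Function.Injective, Fin.forall_fin_two] using ⟨hba.symm, hba⟩
  have hpair : Set.range ![a, b] = {a, b} := by simp [Set.pair_comm]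
  have hsingle : Set.range ![a] = {a} := by simp
  rw [← hpair, ← hsingle,
    ncard_commonNeighbors_diagonal_indicator_range hinj (i := c) (by simp [hca, hcb]),
    ncard_commonNeighbors_diagonal_indicator_range (Function.injective_of_subsingleton _)
      (i := c) (by simp [hca]), Set.ncard_compl, Set.ncard_compl]
  have hle := Set.ncard_le_card (eigenvalueOneBlock F ![a, b])
  omega

end unitaryCayley

/-- For `n > 2`, in `Cay(M_n(F), GL_n(F))` the zero matrix is non-adjacent to both
`E₁₁` and `D = diag{1,1,0,…,0}`, and the number of common neighbors of `E₁₁` and `0`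
differs from the number of common neighbors of `D` and `0`. -/
theorem commonNeighbors_E11_ne_commonNeighbors_diag (F : Type*) [Field F] [Fintype F]
    (n : ℕ) (hn : 2 < n) :
    ¬ (unitaryCayley F n).Adj
        (Matrix.single (⟨0, by omega⟩ : Fin n) ⟨0, by omega⟩ (1 : F)) 0 ∧
    ¬ (unitaryCayley F n).Adj
        (Matrix.diagonal (fun i : Fin n => if (i : ℕ) < 2 then (1 : F) else 0)) 0 ∧
    ((unitaryCayley F n).commonNeighbors
        (Matrix.single (⟨0, by omega⟩ : Fin n) ⟨0, by omega⟩ (1 : F)) 0).ncard ≠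
      ((unitaryCayley F n).commonNeighbors
        (Matrix.diagonal (fun i : Fin n => if (i : ℕ) < 2 then (1 : F) else 0)) 0).ncard := by
  have hE : Matrix.single (⟨0, by omega⟩ : Fin n) ⟨0, by omega⟩ (1 : F) =
      diagonal (({⟨0, by omega⟩} : Set (Fin n)).indicator 1) := by
    rw [Set.indicator_singleton, Pi.one_apply, diagonal_single]
  have hD : diagonal (fun i : Fin n => if (i : ℕ) < 2 then (1 : F) else 0) =
      diagonal (({⟨0, by omega⟩, ⟨1, by omega⟩} : Set (Fin n)).indicator 1) := by
    congr 1
    ext i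
    simp [Set.indicator_apply, Fin.ext_iff, Nat.le_one_iff_eq_zero_or_eq_one]
  rw [hE, hD]
  refine ⟨unitaryCayley.not_adj_zero (not_isUnit_diagonal_indicator (i := ⟨2, hn⟩) (by simp)),
    unitaryCayley.not_adj_zero (not_isUnit_diagonal_indicator (i := ⟨2, hn⟩) (by simp)), ?_⟩
  exact (unitaryCayley.ncard_commonNeighbors_pair_lt_singleton (c := ⟨2, hn⟩)
    (by simp) (by simp) (by simp)).ne'
end
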